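/- If ν is a multiplicative character of F_q and χ = ν⁴, then T(χ) = q^{−1}·A₄(−1)·( A̅₄(a)G(A₄) + G(A̅₄) ) · ν̄(a) · Σ_{m=0}^{3} A₄^{1−m}(a) · G(νA₄^{m}) · G(νA₄^{m−1}), where character powers A₄^{n} for negative n are interpreted via A₄^{−1} = A̅₄. -/

import Mathlib

/-!
For `j ≠ 0` the delta terms of `P(j,0)` vanish, and the substitution `x ↦ x / j²` turns it into
`G(φ)⁻¹ ∑ φ(c/x - x) ψ(x + c/x)` with `c = a j⁴` and `φ = A₄²` (`Pkatz_zero_right`). The heart of the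
proof is that this sum is a constant times the twisted Kloosterman sum
`K(c) = ∑ A₄(x) ψ(x + c/x)` (`key_identity`): expanding the characters as additive Fourier
transforms reduces the claim to
`∑_w φ(w) ∑_x ψ(x(1 - w²) + c/x) = ∑_w φ(w) ∑_x ψ(x(1 - w) + c(1 + w)/x)`,
which holds for each `w` separately (`sum_units_factor`). The symmetry `x ↦ c/x` relates the sums
`K` for `A₄` and its inverse (`twistedKloosterman_inv`), and `A₄(a j⁴) = A₄(a)`, so
`P(j,0) = q⁻¹ A₄(-1) (A̅₄(a) G(A₄) + G(A̅₄)) K(a j⁴)`.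

Finally `∑_j ν(j⁴) K(a j⁴) = ∑_m ∑_u ν A₄^m(u) K(a u)` (`sum_comp_pow_four`), and each inner sum is a
product of two Gauss sums (`mellin_twistedKloosterman`).
-/

open Finset

noncomputable section

variable {F : Type} [Field F] [Fintype F] [DecidableEq F]

/-- Katz's mixed character sum `P(j,k)`; the quadratic character `φ` is `A₄ ^ 2`. -/
def Pkatz (ψ : AddChar F ℂ) (A₄ : MulChar F ℂ) (a : F) (j k : F) : ℂ :=
  (if j = k then 1 else 0) + (A₄ ^ 2) (-1) * (if j = -k then 1 else 0) +
    (gaussSum (A₄ ^ 2) ψ)⁻¹ *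
      ∑ x ∈ univ.filter (fun x : F => x ≠ 0),
        (A₄ ^ 2) (a / x - x) * ψ (x * (j + k) ^ 2 + (a / x) * (j - k) ^ 2)

/-- Katz's sums `V(j)`. -/
def Vkatz (ψ : AddChar F ℂ) (A₄ : MulChar F ℂ) (a : F) (τ : ℂ) (j : F) : ℂ :=
  if j = 0 then gaussSum A₄ ψ / τ + τ / gaussSum A₄ ψ
  else τ⁻¹ * ∑ x ∈ univ.filter (fun x : F => x ≠ 0), A₄ x * ψ (x + a * j ^ 4 / x)

/-- The finite field hypergeometric function `₂F₁(A,B;C|x)`. -/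
def hyp2F1 (A B C : MulChar F ℂ) (x : F) : ℂ :=
  ((1 : MulChar F ℂ) x / (Fintype.card F : ℂ)) *
    ∑ y : F, B y * (B⁻¹ * C) (y - 1) * A⁻¹ (1 - x * y)

/-- The Jacobi sum `J(A,B)`. -/
def Jsum (A B : MulChar F ℂ) : ℂ := ∑ y : F, A y * B (1 - y)

/-- The sum `h(D,j)`; the quadratic character `φ` is `A₄ ^ 2`. -/
def hKatz (A₄ D : MulChar F ℂ) (j : F) : ℂ :=
  ∑ x ∈ univ.filter (fun x : F => x ≠ 0),
    D x * (A₄ ^ 2) (1 - x) * ((D⁻¹ ^ 2) * A₄ ^ 2) (x * (j + 1) ^ 2 + (j - 1) ^ 2)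

/-- The sum `H(λ₁)`; the quadratic character `φ` is `A₄ ^ 2`. -/
def Hkatz (A₄ lam : MulChar F ℂ) (a : F) : ℂ :=
  ∑ p ∈ (univ ×ˢ univ).filter
      (fun p : F × F => p.1 ≠ 0 ∧ p.2 ≠ 0 ∧
        p.2 * (p.1 + 1) ^ 2 + a * (p.1 - 1) ^ 2 / p.2 = 0),
    (lam ^ 2 * A₄ ^ 2) p.1 * (A₄ ^ 2) (p.2 - a / p.2)

/-- The Mellin transform `S(χ)` of the sums `V(j)`. -/
def Smel (ψ : AddChar F ℂ) (A₄ : MulChar F ℂ) (a : F) (τ : ℂ) (χ : MulChar F ℂ) : ℂ :=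
  ∑ j ∈ univ.filter (fun j : F => j ≠ 0), χ j * Vkatz ψ A₄ a τ j

/-- The Mellin transform `T(χ)` of the sums `P(j,0)`. -/
def Tmel (ψ : AddChar F ℂ) (A₄ : MulChar F ℂ) (a : F) (χ : MulChar F ℂ) : ℂ :=
  ∑ j ∈ univ.filter (fun j : F => j ≠ 0), χ j * Pkatz ψ A₄ a j 0

/-- The double Mellin transform `T(χ₁,χ₂)` of the sums `P(j,k)`. -/
def Tmel2 (ψ : AddChar F ℂ) (A₄ : MulChar F ℂ) (a : F) (χ₁ χ₂ : MulChar F ℂ) : ℂ :=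
  ∑ j ∈ univ.filter (fun j : F => j ≠ 0), ∑ k ∈ univ.filter (fun k : F => k ≠ 0),
    χ₁ j * χ₂ k * Pkatz ψ A₄ a j k

end

section Helpers

variable {F : Type} [Field F] [Fintype F] [DecidableEq F]

lemma sum_ne_zero_eq_sum_units (f : F → ℂ) :
    ∑ x ∈ univ.filter (fun x : F => x ≠ 0), f x = ∑ u : Fˣ, f u := by
  symm
  refine Finset.sum_bij (fun u _ => (u : F)) ?_ ?_ ?_ ?_
  · intro u _; simp
  · intro u _ v _ h; exact Units.ext h
  · intro b hb
    exact ⟨Units.mk0 b (by simpa using hb), by simp, rfl⟩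
  · intro u _; rfl

lemma sum_eq_sum_units (f : F → ℂ) (h0 : f 0 = 0) :
    ∑ x : F, f x = ∑ u : Fˣ, f u := by
  rw [← sum_ne_zero_eq_sum_units, Finset.sum_filter_of_ne]
  intro x _ hx h
  exact hx (h ▸ h0)

lemma sq_apply_sq {K : Type} [Field K]
    {A : MulChar K ℂ} (hA : orderOf A = 4) {z : K} (hz : z ≠ 0) :
    (A ^ 2) (z ^ 2) = 1 := by
  have h : A ^ 4 = 1 := hA ▸ pow_orderOf_eq_one A
  have h1 : (A ^ 4) z = 1 := by rw [h, MulChar.one_apply hz.isUnit]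
  rw [MulChar.pow_apply' _ (by norm_num)] at h1 ⊢
  rw [map_pow, ← pow_mul, h1]

/-- The square of a character of order 4 is the quadratic character: it is `1` on squares, and
were it `1` on a single nonsquare it would be trivial. -/
lemma sq_apply_eq_quadraticChar {A : MulChar F ℂ} (hA : orderOf A = 4)
    (y : F) : (A ^ 2) y = (quadraticChar F y : ℂ) := by
  by_cases hy : y = 0
  · simp [hy, MulChar.map_zero]
  have hsq : ∀ w : F, w ≠ 0 → IsSquare w → (A ^ 2) w = 1 := by
    rintro w hw ⟨z, rfl⟩
    rw [← pow_two]
    exact sq_apply_sq hA (by rintro rfl; simp at hw)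
  by_cases hs : IsSquare y
  · rw [hsq y hy hs, (quadraticChar_one_iff_isSquare hy).2 hs]; simp
  have hm : quadraticChar F y = -1 := quadraticChar_neg_one_iff_not_isSquare.2 hs
  have h1 : (A ^ 2) y * (A ^ 2) y = 1 := by
    rw [← map_mul, ← pow_two]; exact sq_apply_sq hA hy
  rcases mul_self_eq_one_iff.1 h1 with h | h
  · exfalso
    have : A ^ 2 = 1 := by
      ext u
      rw [MulChar.one_apply_coe]
      by_cases hu : IsSquare (u : F)
      · exact hsq _ u.ne_zero hu
      · have hu' : quadraticChar F (u : F) = -1 := quadraticChar_neg_one_iff_not_isSquare.2 hu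
        have : IsSquare ((u : F) * y) := by
          rw [← quadraticChar_one_iff_isSquare (mul_ne_zero u.ne_zero hy), map_mul, hm, hu']
          norm_num
        have h2 := hsq _ (mul_ne_zero u.ne_zero hy) this
        rwa [map_mul, h, mul_one] at h2
    have := orderOf_dvd_of_pow_eq_one this
    rw [hA] at this
    omega
  · rw [h, hm]; simp

lemma sum_comp_sq (hF : ringChar F ≠ 2) {A : MulChar F ℂ} (hA : orderOf A = 4) (f : F → ℂ) :
    ∑ z : F, f (z ^ 2) = ∑ y : F, (1 + (A ^ 2) y) * f y := by
  rw [← Finset.sum_fiberwise (s := univ) (g := fun z : F => z ^ 2)]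
  refine Finset.sum_congr rfl fun y _ => ?_
  rw [Finset.sum_congr rfl (g := fun _ => f y) (by intro z hz; rw [(Finset.mem_filter.1 hz).2]),
    Finset.sum_const, nsmul_eq_mul, sq_apply_eq_quadraticChar hA]
  congr 1
  have h := quadraticChar_card_sqrts hF y
  have h2 : ({x : F | x ^ 2 = y}.toFinset) = univ.filter (fun x : F => x ^ 2 = y) := by
    ext; simp
  rw [h2] at h
  have h3 : (((univ.filter (fun x : F => x ^ 2 = y)).card : ℤ) : ℂ) =
    ((quadraticChar F y + 1 : ℤ) : ℂ) := by rw [h]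
  push_cast at h3
  rw [h3, add_comm]

lemma inv_eq_pow_three {K : Type} [Field K]
    {A : MulChar K ℂ} (hA : orderOf A = 4) : A⁻¹ = A ^ 3 := by
  have h : A ^ 4 = 1 := hA ▸ pow_orderOf_eq_one A
  rw [inv_eq_iff_mul_eq_one, ← pow_succ', h]

/-- `A(y) + A̅(y)` vanishes on nonsquares and equals `2 A²(z)` at `y = z²`. -/
lemma sum_sq_mul_comp_sq (hF : ringChar F ≠ 2) {A : MulChar F ℂ} (hA : orderOf A = 4)
    (f : F → ℂ) :
    ∑ z : F, (A ^ 2) z * f (z ^ 2) = ∑ y : F, (A y + A⁻¹ y) * f y := by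
  have h := sum_comp_sq hF hA (fun y => A y * f y)
  have h2 : ∀ z : F, (A ^ 2) z = A (z ^ 2) := fun z => by
    rw [MulChar.pow_apply' _ (by norm_num), map_pow]
  simp_rw [h2]
  rw [h]
  refine Finset.sum_congr rfl fun y _ => ?_
  rw [inv_eq_pow_three hA, MulChar.pow_apply' _ (by norm_num), MulChar.pow_apply' _ (by norm_num)]
  ring

/-- The number of fourth roots of a nonzero `y` is the sum of the values at `y` of the four powers
of `A`. The leading `1` is the constant, not the trivial character, so that `y = 0` counts once. -/
lemma sum_comp_pow_four (hF : ringChar F ≠ 2) {A : MulChar F ℂ} (hA : orderOf A = 4)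
    (f : F → ℂ) :
    ∑ j : F, f (j ^ 4) = ∑ y : F, (1 + (A ^ 2) y + A y + A⁻¹ y) * f y := by
  have h := sum_comp_sq hF hA (fun y => f (y ^ 2))
  simp_rw [← pow_mul] at h
  norm_num at h
  rw [h]
  simp_rw [add_mul, one_mul, Finset.sum_add_distrib]
  rw [sum_sq_mul_comp_sq hF hA, sum_comp_sq hF hA]
  simp_rw [add_mul, one_mul, Finset.sum_add_distrib]
  ring

/-- Twisted Kloosterman sum `∑ A(x) ψ(x + c/x)` over nonzero `x`. -/
noncomputable def twistedKloosterman (ψ : AddChar F ℂ) (A : MulChar F ℂ) (c : F) : ℂ :=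
  ∑ x : Fˣ, A x * ψ (x + c / x)

lemma twistedKloosterman_inv (ψ : AddChar F ℂ) (A : MulChar F ℂ) (c : Fˣ) :
    twistedKloosterman ψ A⁻¹ c = A⁻¹ c * twistedKloosterman ψ A c := by
  unfold twistedKloosterman
  rw [Finset.mul_sum]
  refine Fintype.sum_equiv ((Equiv.inv Fˣ).trans (Equiv.mulLeft c)) _ _ fun x => ?_
  have h1 : A⁻¹ (c : F) * A c = 1 := by
    rw [← MulChar.mul_apply, inv_mul_cancel, MulChar.one_apply_coe]
  simp only [Equiv.trans_apply, Equiv.inv_apply, Equiv.coe_mulLeft, Units.val_mul,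
    Units.val_inv_eq_inv_val, map_mul]
  rw [← mul_assoc, ← mul_assoc, h1, one_mul, MulChar.inv_apply' A]
  congr 2
  have := x.ne_zero
  have := c.ne_zero
  field_simp
  ring

lemma gaussSum_mul_apply_unit {K : Type} [Field K] [Fintype K]
    (ψ : AddChar K ℂ) (χ : MulChar K ℂ) (u : Kˣ) :
    ∑ y : K, χ y * ψ (y * u) = χ⁻¹ u * gaussSum χ ψ := by
  rw [← gaussSum_mulShift_eq]
  simp only [gaussSum, AddChar.mulShift_apply, mul_comm]

lemma gaussSum_mul_apply (ψ : AddChar F ℂ) {χ : MulChar F ℂ} (hχ : χ ≠ 1) (t : F) :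
    ∑ y : F, χ y * ψ (y * t) = χ⁻¹ t * gaussSum χ ψ := by
  by_cases ht : t = 0
  · simp [ht, MulChar.sum_eq_zero_of_ne_one hχ, MulChar.map_zero]
  · exact gaussSum_mul_apply_unit ψ χ (Units.mk0 t ht)

/-- Write `1 - w² = (1 - w)(1 + w)` and rescale `x` by `1 + w` when `1 + w ≠ 0`. For `w = -1` the
sides are `∑ ψ(c/x)` and `∑ ψ(2x)`, which agree under `x ↦ c/(2x)`. -/
lemma sum_units_factor (hF : ringChar F ≠ 2) {ψ : AddChar F ℂ} (c : Fˣ) (w : F) :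
    ∑ x : Fˣ, ψ (x * (1 - w ^ 2) + c / x) =
      ∑ x : Fˣ, ψ (x + c / x + w * (c / x - x)) := by
  by_cases hw : 1 + w = 0
  · have hw' : w = -1 := by linear_combination hw
    subst hw'
    have h2 : (2 : F) ≠ 0 := Ring.two_ne_zero hF
    refine Fintype.sum_equiv ((Equiv.inv Fˣ).trans
      (Equiv.mulLeft (c * (Units.mk0 2 h2)⁻¹))) _ _ fun x => ?_
    congr 1
    simp only [Equiv.trans_apply, Equiv.inv_apply, Equiv.coe_mulLeft, Units.val_mul,
      Units.val_inv_eq_inv_val, Units.val_mk0]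
    have := x.ne_zero
    have := c.ne_zero
    field_simp
    ring
  · refine Fintype.sum_equiv (Equiv.mulLeft (Units.mk0 _ hw)) _ _ fun x => ?_
    congr 1
    simp only [Equiv.coe_mulLeft, Units.val_mul, Units.val_mk0]
    have := x.ne_zero
    field_simp
    ring

/-- In terms of the quadratic character `φ = A²`, this says
`A(-1) G(φ) ∑ φ(c/x - x) ψ(x + c/x) = G(A̅) K_A(c) + G(A) K_A̅(c)`. Unfolding the Gauss sums, the right
side is `∑ (A(y) + A̅(y)) ψ(x(1 + y) + c/x)`, where only squares `y = z²` contribute, and `z = i w`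
with `i² = -1` gives the left side. -/
lemma key_identity (hF : ringChar F ≠ 2) {A : MulChar F ℂ} (hA : orderOf A = 4)
    (ψ : AddChar F ℂ) {i : F} (hi : i * i = -1) (c : Fˣ) :
    A (-1) * (gaussSum (A ^ 2) ψ * ∑ x : Fˣ, (A ^ 2) (c / x - x) * ψ (x + c / x)) =
      gaussSum A⁻¹ ψ * twistedKloosterman ψ A c + gaussSum A ψ * twistedKloosterman ψ A⁻¹ c := by
  have hA2 : A ^ 2 ≠ 1 := by
    intro h
    have := orderOf_dvd_of_pow_eq_one h
    rw [hA] at this; omega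
  have hinv2 : (A ^ 2)⁻¹ = A ^ 2 := by
    rw [inv_eq_iff_mul_eq_one, ← pow_add, ← pow_orderOf_eq_one A, hA]
  have hK : ∀ B : MulChar F ℂ, gaussSum B⁻¹ ψ * twistedKloosterman ψ B c =
      ∑ y : F, B⁻¹ y * ∑ x : Fˣ, ψ (x * (1 + y) + c / x) := by
    intro B
    simp_rw [twistedKloosterman, Finset.mul_sum]
    rw [Finset.sum_comm]
    refine Finset.sum_congr rfl fun x _ => ?_
    have h := gaussSum_mul_apply_unit ψ B⁻¹ x
    rw [inv_inv] at h
    rw [← mul_assoc, mul_comm (gaussSum _ _), ← h, Finset.sum_mul]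
    refine Finset.sum_congr rfl fun y _ => ?_
    rw [mul_assoc, ← AddChar.map_add_eq_mul]
    congr 2
    ring
  have hL : gaussSum (A ^ 2) ψ * ∑ x : Fˣ, (A ^ 2) (c / x - x) * ψ (x + c / x) =
      ∑ w : F, (A ^ 2) w * ∑ x : Fˣ, ψ (x + c / x + w * (c / x - x)) := by
    simp_rw [Finset.mul_sum]
    rw [Finset.sum_comm]
    refine Finset.sum_congr rfl fun x _ => ?_
    have h := gaussSum_mul_apply ψ hA2 (c / x - x)
    rw [hinv2] at h
    rw [← mul_assoc, mul_comm (gaussSum _ _), ← h, Finset.sum_mul]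
    refine Finset.sum_congr rfl fun y _ => ?_
    rw [mul_assoc, ← AddChar.map_add_eq_mul]
    congr 2
    ring
  have hK' := hK A⁻¹
  rw [inv_inv] at hK'
  rw [hK', hK A, hL, add_comm, ← Finset.sum_add_distrib]
  simp_rw [← add_mul]
  rw [← sum_sq_mul_comp_sq hF hA (fun y => ∑ x : Fˣ, ψ (x * (1 + y) + c / x)), Finset.mul_sum]
  have hi0 : i ≠ 0 := by rintro rfl; simp at hi
  refine Fintype.sum_equiv (Equiv.mulLeft₀ i hi0) _ _ fun w => ?_
  have hAi : A (-1) = (A ^ 2) i := by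
    rw [← hi, map_mul, MulChar.pow_apply' _ (by norm_num), pow_two]
  change _ = (A ^ 2) (i * w) * ∑ x : Fˣ, ψ (x * (1 + (i * w) ^ 2) + c / x)
  rw [map_mul, ← hAi, ← sum_units_factor hF, mul_assoc]
  have : (i * w) ^ 2 = - w ^ 2 := by rw [mul_pow, pow_two i, hi]; ring
  simp only [this, sub_eq_add_neg]

/-- The Mellin transform of the twisted Kloosterman sum is a product of two Gauss sums. -/
lemma mellin_twistedKloosterman (ψ : AddChar F ℂ) (A μ : MulChar F ℂ) (a : Fˣ) :
    ∑ u : F, μ u * twistedKloosterman ψ A (a * u) =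
      μ⁻¹ a * (gaussSum μ ψ * gaussSum (μ * A) ψ) := by
  simp_rw [twistedKloosterman, Finset.mul_sum]
  rw [Finset.sum_comm]
  have h0 : gaussSum (μ * A) ψ = ∑ x : Fˣ, (μ * A) x * ψ x :=
    sum_eq_sum_units (fun x => (μ * A) x * ψ x) (by simp [MulChar.map_zero])
  rw [h0, Finset.mul_sum, Finset.mul_sum]
  refine Finset.sum_congr rfl fun x _ => ?_
  have h := gaussSum_mul_apply_unit ψ μ (a * x⁻¹)
  have h2 : μ⁻¹ ((a * x⁻¹ : Fˣ) : F) = μ⁻¹ a * μ x := by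
    rw [Units.val_mul, map_mul, Units.val_inv_eq_inv_val, ← MulChar.inv_apply', inv_inv]
  rw [h2] at h
  calc _ = A x * ψ x * ∑ y : F, μ y * ψ (y * ((a * x⁻¹ : Fˣ) : F)) := by
        rw [Finset.mul_sum]
        refine Finset.sum_congr rfl fun y _ => ?_
        rw [AddChar.map_add_eq_mul]
        have : (a : F) * y / x = y * ((a * x⁻¹ : Fˣ) : F) := by
          rw [Units.val_mul, Units.val_inv_eq_inv_val]; ring
        rw [this]; ring
    _ = _ := by rw [h, MulChar.mul_apply]; ring

/-- For `j ≠ 0`, replacing `x` by `x / j²` turns `P(j,0)` into a function of `a j⁴` only. -/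
lemma Pkatz_zero_right {A : MulChar F ℂ} (hA : orderOf A = 4) (ψ : AddChar F ℂ) (a j : Fˣ) :
    Pkatz ψ A a j 0 = (gaussSum (A ^ 2) ψ)⁻¹ *
      ∑ x : Fˣ, (A ^ 2) (((a * j ^ 4 : Fˣ) : F) / x - x) *
        ψ (x + ((a * j ^ 4 : Fˣ) : F) / x) := by
  unfold Pkatz
  rw [sum_ne_zero_eq_sum_units]
  simp only [neg_zero, j.ne_zero, if_false, mul_zero, add_zero, zero_add, sub_zero]
  congr 1
  refine Fintype.sum_equiv (Equiv.mulLeft (j ^ 2)) _ _ fun x => ?_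
  have hx := x.ne_zero
  have hj := j.ne_zero
  have h1 : ((a * j ^ 4 : Fˣ) : F) / ((j ^ 2 * x : Fˣ) : F) - ((j ^ 2 * x : Fˣ) : F) =
      (j : F) ^ 2 * (a / x - x) := by
    push_cast; field_simp
  have h2 : ((j ^ 2 * x : Fˣ) : F) + ((a * j ^ 4 : Fˣ) : F) / ((j ^ 2 * x : Fˣ) : F) =
      x * (j : F) ^ 2 + a / x * (j : F) ^ 2 := by
    push_cast; field_simp
  rw [Equiv.coe_mulLeft, h1, h2, map_mul, sq_apply_sq hA hj, one_mul]

end Helpers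

/-- Evaluation of `T(ν⁴)` in terms of Gauss sums. -/
theorem T_eval_fourth_power
    (F : Type) [Field F] [Fintype F] [DecidableEq F]
    (hq : Fintype.card F % 4 = 1)
    (ψ : AddChar F ℂ) (hψ : ψ ≠ 1)
    (A₄ : MulChar F ℂ) (hA₄ : orderOf A₄ = 4)
    (a : F) (ha : a ≠ 0)
    (ν : MulChar F ℂ) :
    Tmel ψ A₄ a (ν ^ 4) =
      (Fintype.card F : ℂ)⁻¹ * A₄ (-1) *
        (A₄⁻¹ a * gaussSum A₄ ψ + gaussSum A₄⁻¹ ψ) *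
        (ν⁻¹ a * ∑ m ∈ Finset.range 4,
          (A₄ ^ (1 - (m : ℤ))) a * gaussSum (ν * A₄ ^ (m : ℤ)) ψ *
            gaussSum (ν * A₄ ^ ((m : ℤ) - 1)) ψ) := by
  have hF : ringChar F ≠ 2 := by
    intro h
    have := FiniteField.even_card_of_char_two h
    omega
  obtain ⟨i, hi⟩ : IsSquare (-1 : F) := FiniteField.isSquare_neg_one_iff.2 (by omega)
  have hA2 : A₄ ^ 2 ≠ 1 := by
    intro h
    have := orderOf_dvd_of_pow_eq_one h
    rw [hA₄] at this; omega
  have hA4 : A₄ ^ 4 = 1 := hA₄ ▸ pow_orderOf_eq_one A₄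
  have hquad : (A₄ ^ 2).IsQuadratic := by
    intro y
    rw [sq_apply_eq_quadraticChar hA₄]
    rcases quadraticChar_isQuadratic F y with h | h | h <;> simp [h]
  have hAm : A₄ (-1) * A₄ (-1) = 1 := by
    rw [← map_mul]; simp
  have hG : gaussSum (A₄ ^ 2) ψ ^ 2 = Fintype.card F := by
    rw [gaussSum_sq hA2 hquad (AddChar.IsPrimitive.of_ne_one hψ)]
    rw [MulChar.pow_apply' _ (by norm_num), pow_two, hAm, one_mul]
  have hq0 : (Fintype.card F : ℂ) ≠ 0 := by simp
  have hG0 : gaussSum (A₄ ^ 2) ψ ≠ 0 := by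
    intro h; rw [h] at hG; simp at hG; exact hq0 hG.symm
  lift a to Fˣ using ha.isUnit
  set C : ℂ := (Fintype.card F : ℂ)⁻¹ * A₄ (-1) *
        (A₄⁻¹ a * gaussSum A₄ ψ + gaussSum A₄⁻¹ ψ) with hC
  have hP : ∀ j : Fˣ, Pkatz ψ A₄ a j 0 = C * twistedKloosterman ψ A₄ (a * (j : F) ^ 4) := by
    intro j
    have hk := key_identity hF hA₄ ψ hi.symm (a * j ^ 4)
    rw [twistedKloosterman_inv] at hk
    have hj : A₄⁻¹ ((a * j ^ 4 : Fˣ) : F) = A₄⁻¹ a := by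
      have : A₄⁻¹ ^ 4 = 1 := by rw [inv_pow, hA4, inv_one]
      rw [Units.val_mul, Units.val_pow_eq_pow_val, map_mul, map_pow,
        ← MulChar.pow_apply' _ (by norm_num), this, MulChar.one_apply_coe, mul_one]
    rw [hj] at hk
    rw [Pkatz_zero_right hA₄]
    set L := ∑ x : Fˣ, (A₄ ^ 2) (((a * j ^ 4 : Fˣ) : F) / x - x) *
        ψ (x + ((a * j ^ 4 : Fˣ) : F) / x)
    have hL : gaussSum (A₄ ^ 2) ψ * L = A₄ (-1) *
        (A₄⁻¹ a * gaussSum A₄ ψ + gaussSum A₄⁻¹ ψ) *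
          twistedKloosterman ψ A₄ ((a * j ^ 4 : Fˣ) : F) := by
      linear_combination A₄ (-1) * hk - (gaussSum (A₄ ^ 2) ψ * L) * hAm
    have : ((a * j ^ 4 : Fˣ) : F) = (a : F) * (j : F) ^ 4 := by push_cast; rfl
    rw [← this, hC, mul_assoc _ (A₄ (-1)), mul_assoc, ← hL, ← hG]
    field_simp
  unfold Tmel
  rw [sum_ne_zero_eq_sum_units]
  simp_rw [hP]
  have hsum : ∑ j : Fˣ, (ν ^ 4) (j : F) * (C * twistedKloosterman ψ A₄ (a * (j : F) ^ 4)) =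
      C * ∑ j : F, ν (j ^ 4) * twistedKloosterman ψ A₄ (a * j ^ 4) := by
    rw [sum_eq_sum_units (fun j : F => ν (j ^ 4) * twistedKloosterman ψ A₄ (a * j ^ 4))
      (by simp [MulChar.map_zero]), Finset.mul_sum]
    refine Finset.sum_congr rfl fun j _ => ?_
    rw [MulChar.pow_apply' _ (by norm_num), map_pow]; ring
  rw [hsum, sum_comp_pow_four hF hA₄ (fun u => ν u * twistedKloosterman ψ A₄ (a * u))]
  congr 1
  have h0 := mellin_twistedKloosterman ψ A₄ ν a
  have h1 := mellin_twistedKloosterman ψ A₄ (ν * A₄) a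
  have h2 := mellin_twistedKloosterman ψ A₄ (ν * A₄ ^ 2) a
  have h3 := mellin_twistedKloosterman ψ A₄ (ν * A₄⁻¹) a
  have e2 : ν * A₄ * A₄ = ν * A₄ ^ 2 := by rw [mul_assoc, pow_two]
  have e3 : ν * A₄ ^ 2 * A₄ = ν * A₄ ^ 3 := by rw [mul_assoc, pow_succ A₄ 2]
  have e0 : ν * A₄⁻¹ * A₄ = ν := by group
  have ei2 : (A₄ ^ 2)⁻¹ = A₄ ^ 2 := by
    rw [inv_eq_iff_mul_eq_one, ← pow_add]; exact hA4
  rw [e2] at h1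
  rw [e3] at h2
  rw [e0] at h3
  simp only [mul_inv, MulChar.mul_apply, inv_inv, ei2] at h0 h1 h2 h3
  simp only [Finset.sum_range_succ, Finset.sum_range_zero]
  norm_num
  have : ∀ u : F, (1 + (A₄ ^ 2) u + A₄ u + A₄⁻¹ u) * (ν u * twistedKloosterman ψ A₄ (a * u)) =
      ν u * twistedKloosterman ψ A₄ (a * u) + ν u * (A₄ ^ 2) u * twistedKloosterman ψ A₄ (a * u)
      + ν u * A₄ u * twistedKloosterman ψ A₄ (a * u)
      + ν u * A₄⁻¹ u * twistedKloosterman ψ A₄ (a * u) := fun u => by ring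
  simp_rw [this, Finset.sum_add_distrib]
  rw [h0, h1, h2, h3, ei2]
  ring
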